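/- arXiv:1103.5667 — 3 statements merged into one kernel-verified Lean document; each statement's English description precedes it below -/
import Mathlib

section
/- Let n ∈ ℕ, q ∈ (0,∞], τ ∈ [0,∞), δ ∈ (nτ,∞) and p ∈ (0,∞). Then there exists a constant C > 0 such that for every family {g_m}_{m∈ℤ} of measurable functions g_m : ℝⁿ → [0,∞], the functions G_j := Σ_{m∈ℤ} 2^{-|m-j|δ} g_m (j ∈ ℤ) satisfy ‖{G_j}_{j∈ℤ} | ℓ^q(L^p_τ(ℝⁿ,ℤ))‖ ≤ C ‖{g_m}_{m∈ℤ} | ℓ^q(L^p_τ(ℝⁿ,ℤ))‖. -/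
/-!
Substituting `m = j + i` turns the convolution into a superposition of shifts,
`G_j = ∑_i 2^{-|i|δ} g_{j+i}`. With `r = min(1, p, q)`, the `r`-th power of the mixed
`ℓ^q(L^p(P))` quasi-norm is countably subadditive (`lintegral_rpow_subadditive`, a consequence of
Minkowski's inequality with exponents `p/r, q/r ≥ 1`, used once for `L^p` and once for `ℓ^q`), so
only the shifts `{g_{j+i}}_j` have to be estimated, one `i` at a time.

For a cube `P` with side length `2^{-j}`, let `P'` be the dyadic ancestor of `P` with side length
`2^{|i|-j}`. The levels `l + i`, `l ≥ j`, are all `≥ j - |i|`, so the `ℓ^q(L^p)` quasi-norm of the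
shifted family over `P` is at most that of `g` over `P'`, hence at most
`|P'|^τ ‖g‖ = 2^{|i|nτ} |P|^τ ‖g‖`. The weights combine to `2^{-|i|(δ-nτ)}`, whose `r`-th powers are
summable over `i ∈ ℤ` because `δ > nτ`.
-/

open MeasureTheory ENNReal Set

noncomputable section

abbrev En (n : ℕ) := EuclideanSpace ℝ (Fin n)

def dyadicCube (n : ℕ) (j : ℤ) (k : Fin n → ℤ) : Set (En n) :=
  {x | ∀ i, (2:ℝ) ^ (-j) * (k i : ℝ) ≤ x i ∧ x i < (2:ℝ) ^ (-j) * ((k i : ℝ) + 1)}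

def lpIntOn {α : Type*} [MeasurableSpace α] (μ : Measure α) (p : ℝ≥0∞) (A : Set α)
    (f : α → ℝ≥0∞) : ℝ≥0∞ :=
  if p = ∞ then essSup f (μ.restrict A)
  else (∫⁻ x in A, f x ^ p.toReal ∂μ) ^ (1 / p.toReal)

def lqSumFrom (q : ℝ≥0∞) (j : ℤ) (F : ℤ → ℝ≥0∞) : ℝ≥0∞ :=
  if q = ∞ then ⨆ (l : ℤ) (_ : j ≤ l), F l
  else (∑' l : {l : ℤ // j ≤ l}, F (l : ℤ) ^ q.toReal) ^ (1 / q.toReal)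

def lqLpTauNorm (n : ℕ) (p q : ℝ≥0∞) (τ : ℝ)
    (g : ℤ → En n → ℝ≥0∞) : ℝ≥0∞ :=
  ⨆ (j : ℤ) (k : Fin n → ℤ),
    (2 : ℝ≥0∞) ^ ((j : ℝ) * n * τ) *
      lqSumFrom q j (fun l => lpIntOn volume p (dyadicCube n j k) (g l))

theorem tsum_rpow_le_tsum_rpow {ι : Type*} (a : ι → ℝ≥0∞) {r : ℝ} (hr : 0 < r) (hr1 : r ≤ 1) :
    (∑' i, a i) ^ r ≤ ∑' i, a i ^ r := by
  classical
  have hfin : ∀ s : Finset ι, (∑ i ∈ s, a i) ^ r ≤ ∑ i ∈ s, a i ^ r := by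
    intro s
    induction s using Finset.induction_on with
    | empty => simp [hr]
    | insert i s hi ih =>
      rw [Finset.sum_insert hi, Finset.sum_insert hi]
      exact (ENNReal.rpow_add_le_add_rpow _ _ hr.le hr1).trans (by gcongr)
  rw [ENNReal.tsum_eq_iSup_sum]
  change ENNReal.orderIsoRpow r hr _ ≤ _
  rw [OrderIso.map_iSup]
  exact iSup_le fun s => (hfin s).trans (ENNReal.sum_le_tsum s)

/-- Minkowski's inequality for countable sums of `[0, ∞]`-valued functions, obtained from the
finite version by monotone convergence. -/
theorem lintegral_Lp_tsum_le {α ι : Type*} [MeasurableSpace α] [Countable ι] (μ : Measure α)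
    {s : ℝ} (hs : 1 ≤ s) (f : ι → α → ℝ≥0∞) (hf : ∀ i, Measurable (f i)) :
    (∫⁻ x, (∑' i, f i x) ^ s ∂μ) ^ (1 / s) ≤ ∑' i, (∫⁻ x, f i x ^ s ∂μ) ^ (1 / s) := by
  classical
  have hs0 : 0 < s := by linarith
  have hfin : ∀ t : Finset ι, (∫⁻ x, (∑ i ∈ t, f i x) ^ s ∂μ) ^ (1 / s)
      ≤ ∑ i ∈ t, (∫⁻ x, f i x ^ s ∂μ) ^ (1 / s) := by
    intro t
    induction t using Finset.induction_on with
    | empty => simp [hs0]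
    | insert i t hi ih =>
      simp only [Finset.sum_insert hi]
      refine (ENNReal.lintegral_Lp_add_le (hf i).aemeasurable
        (Finset.measurable_fun_sum t fun i _ => hf i).aemeasurable hs).trans ?_
      gcongr
  have hsup : ∀ x, (∑' i, f i x) ^ s = ⨆ t : Finset ι, (∑ i ∈ t, f i x) ^ s := by
    intro x
    rw [ENNReal.tsum_eq_iSup_sum]
    exact (ENNReal.orderIsoRpow s hs0).map_iSup _
  simp only [hsup]
  rw [lintegral_iSup_directed
    (fun t => ((Finset.measurable_fun_sum t fun i _ => hf i).pow_const s).aemeasurable)]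
  · have : 0 < 1 / s := by positivity
    change ENNReal.orderIsoRpow (1 / s) this _ ≤ _
    rw [OrderIso.map_iSup]
    exact iSup_le fun t => (hfin t).trans (ENNReal.sum_le_tsum t)
  · refine directed_of_isDirected_le ?_
    intro t u htu x
    dsimp only
    gcongr

/-- For `r ≤ p`, the functional `‖·‖_p ^ r` respects the `r`-power domination
`F ^ r ≤ ∑ i, (f i) ^ r`: this is Minkowski's inequality in `L^{p/r}` for the functions
`(f i) ^ r`. -/
theorem lintegral_rpow_subadditive {α ι : Type*} [MeasurableSpace α] [Countable ι] (μ : Measure α)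
    {p r : ℝ} (hr : 0 < r) (hrp : r ≤ p) (F : α → ℝ≥0∞) (f : ι → α → ℝ≥0∞)
    (hf : ∀ i, Measurable (f i)) (hF : ∀ x, F x ^ r ≤ ∑' i, f i x ^ r) :
    ((∫⁻ x, F x ^ p ∂μ) ^ (1 / p)) ^ r ≤ ∑' i, ((∫⁻ x, f i x ^ p ∂μ) ^ (1 / p)) ^ r := by
  have hp : 0 < p := hr.trans_le hrp
  have hpow : ∀ y : ℝ≥0∞, y ^ p = (y ^ r) ^ (p / r) := by
    intro y
    rw [← ENNReal.rpow_mul]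
    congr 1
    field_simp
  have hexp : ∀ y : ℝ≥0∞, (y ^ (1 / p)) ^ r = y ^ (1 / (p / r)) := by
    intro y
    rw [← ENNReal.rpow_mul]
    congr 1
    field_simp
  simp only [hexp, hpow]
  refine le_trans ?_ (lintegral_Lp_tsum_le μ ((one_le_div hr).2 hrp) (fun i x => f i x ^ r)
    fun i => (hf i).pow_const r)
  gcongr with x
  exact hF x

theorem lpIntOn_tsum_rpow_le {α ι : Type*} [MeasurableSpace α] [Countable ι] (μ : Measure α)
    {p : ℝ≥0∞} (hp : p ≠ ∞) {r : ℝ} (hr : 0 < r) (hr1 : r ≤ 1) (hrp : r ≤ p.toReal) (A : Set α)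
    (f : ι → α → ℝ≥0∞) (hf : ∀ i, Measurable (f i)) :
    lpIntOn μ p A (fun x => ∑' i, f i x) ^ r ≤ ∑' i, lpIntOn μ p A (f i) ^ r := by
  simp only [lpIntOn, if_neg hp]
  exact lintegral_rpow_subadditive _ hr hrp _ f hf fun x => tsum_rpow_le_tsum_rpow _ hr hr1

theorem lqSumFrom_rpow_le {ι : Type*} [Countable ι] {q : ℝ≥0∞} {r : ℝ} (hr : 0 < r)
    (hrq : q ≠ ∞ → r ≤ q.toReal) (j : ℤ) (F : ℤ → ℝ≥0∞) (f : ι → ℤ → ℝ≥0∞)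
    (hF : ∀ l, F l ^ r ≤ ∑' i, f i l ^ r) :
    lqSumFrom q j F ^ r ≤ ∑' i, lqSumFrom q j (f i) ^ r := by
  by_cases hq : q = ∞
  · simp only [lqSumFrom, if_pos hq]
    change ENNReal.orderIsoRpow r hr _ ≤ _
    simp only [OrderIso.map_iSup]
    refine iSup₂_le fun l hl => (hF l).trans ?_
    gcongr with i
    exact le_iSup₂ (f := fun (l : ℤ) (_ : j ≤ l) => f i l) l hl
  · simp only [lqSumFrom, if_neg hq]
    have h := lintegral_rpow_subadditive (Measure.count : Measure {l : ℤ // j ≤ l}) hr (hrq hq)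
      (fun l => F l) (fun i l => f i l) (fun i => measurable_of_countable _) fun l => hF l
    simpa only [lintegral_count] using h

theorem lpIntOn_const_mul {α : Type*} [MeasurableSpace α] (μ : Measure α) {p : ℝ≥0∞}
    (hp0 : 0 < p) (hp : p ≠ ∞) (A : Set α) {c : ℝ≥0∞} (hc : c ≠ ∞) (f : α → ℝ≥0∞) :
    lpIntOn μ p A (fun x => c * f x) = c * lpIntOn μ p A f := by
  have hp' : 0 < p.toReal := ENNReal.toReal_pos hp0.ne' hp
  simp only [lpIntOn, if_neg hp, ENNReal.mul_rpow_of_nonneg _ _ hp'.le]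
  rw [lintegral_const_mul' _ _ (ENNReal.rpow_ne_top_of_nonneg hp'.le hc),
    ENNReal.mul_rpow_of_nonneg _ _ (by positivity), ← ENNReal.rpow_mul,
    mul_one_div_cancel hp'.ne', ENNReal.rpow_one]

theorem lqSumFrom_const_mul {q : ℝ≥0∞} (hq0 : 0 < q) (j : ℤ) (c : ℝ≥0∞) (F : ℤ → ℝ≥0∞) :
    lqSumFrom q j (fun l => c * F l) = c * lqSumFrom q j F := by
  by_cases hq : q = ∞
  · simp only [lqSumFrom, if_pos hq, ENNReal.mul_iSup]
  · have hq' : 0 < q.toReal := ENNReal.toReal_pos hq0.ne' hq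
    simp only [lqSumFrom, if_neg hq, ENNReal.mul_rpow_of_nonneg _ _ hq'.le]
    rw [ENNReal.tsum_mul_left, ENNReal.mul_rpow_of_nonneg _ _ (by positivity),
      ← ENNReal.rpow_mul, mul_one_div_cancel hq'.ne', ENNReal.rpow_one]

/-- Shifting the levels by `i` maps `[j, ∞)` into `[j', ∞)` as soon as `j' ≤ j + i`. -/
theorem lqSumFrom_shift_le (q : ℝ≥0∞) {j j' i : ℤ} (hj : j' ≤ j + i) (A B : ℤ → ℝ≥0∞)
    (hAB : ∀ l, A l ≤ B l) :
    lqSumFrom q j (fun l => A (l + i)) ≤ lqSumFrom q j' B := by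
  by_cases hq : q = ∞
  · simp only [lqSumFrom, if_pos hq]
    refine iSup₂_le fun l hl => (hAB _).trans ?_
    exact le_iSup₂ (f := fun (l : ℤ) (_ : j' ≤ l) => B l) (l + i) (by omega)
  · simp only [lqSumFrom, if_neg hq]
    gcongr
    let φ : {l : ℤ // j ≤ l} → {l : ℤ // j' ≤ l} := fun l => ⟨l + i, by have := l.2; omega⟩
    have hφ : Function.Injective φ := by
      intro a b hab
      have h := congrArg Subtype.val hab
      simp only [φ] at h
      exact Subtype.ext (by omega)
    refine le_trans ?_ (ENNReal.tsum_comp_le_tsum_of_injective hφ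
      fun l : {l : ℤ // j' ≤ l} => B l ^ q.toReal)
    gcongr with l
    exact hAB _

theorem lpIntOn_mono_set {α : Type*} [MeasurableSpace α] (μ : Measure α) {p : ℝ≥0∞} (hp : p ≠ ∞)
    {A B : Set α} (hAB : A ⊆ B) (f : α → ℝ≥0∞) : lpIntOn μ p A f ≤ lpIntOn μ p B f := by
  simp only [lpIntOn, if_neg hp]
  gcongr

/-- The dyadic ancestor of `Q_{j,k}` that is `t` generations older has index `⌊k / 2^t⌋`. -/
theorem dyadicCube_subset_ancestor (n : ℕ) (j : ℤ) (k : Fin n → ℤ) (t : ℕ) :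
    dyadicCube n j k ⊆ dyadicCube n (j - t) (fun i => k i / 2 ^ t) := by
  intro x hx i
  obtain ⟨h1, h2⟩ := hx i
  have hscale : (2 : ℝ) ^ (-(j - (t : ℤ))) = 2 ^ (-j) * 2 ^ t := by
    rw [show -(j - (t : ℤ)) = -j + t by ring, zpow_add₀ two_ne_zero, zpow_natCast]
  have hpos : (0 : ℝ) < 2 ^ (-j) := by positivity
  have hpow : (0 : ℤ) < 2 ^ t := by positivity
  have hlow : (2 : ℤ) ^ t * (k i / 2 ^ t) ≤ k i := Int.mul_ediv_self_le hpow.ne'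
  have hup : k i + 1 ≤ (2 : ℤ) ^ t * (k i / 2 ^ t + 1) := by
    have := Int.lt_mul_ediv_self_add (x := k i) hpow
    linarith
  have hlow' : (2 : ℝ) ^ t * ((k i / 2 ^ t : ℤ) : ℝ) ≤ k i := by exact_mod_cast hlow
  have hup' : (k i : ℝ) + 1 ≤ (2 : ℝ) ^ t * (((k i / 2 ^ t : ℤ) : ℝ) + 1) := by exact_mod_cast hup
  rw [hscale, mul_assoc, mul_assoc]
  exact ⟨(mul_le_mul_of_nonneg_left hlow' hpos.le).trans h1,
    h2.trans_le (mul_le_mul_of_nonneg_left hup' hpos.le)⟩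

theorem tsum_two_rpow_neg_natAbs_lt_top {ε : ℝ} (hε : 0 < ε) :
    ∑' i : ℤ, (2 : ℝ≥0∞) ^ (-(i.natAbs : ℝ) * ε) < ∞ := by
  have hpow : ∀ m : ℕ, (2 : ℝ≥0∞) ^ (-(m : ℝ) * ε) = ((2 : ℝ≥0∞) ^ (-ε)) ^ m := by
    intro m
    rw [← ENNReal.rpow_natCast, ← ENNReal.rpow_mul]
    congr 1
    ring
  have hlt : (2 : ℝ≥0∞) ^ (-ε) < 1 :=
    ENNReal.rpow_lt_one_of_one_lt_of_neg (by norm_num) (by linarith)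
  have hgeom : ∑' m : ℕ, ((2 : ℝ≥0∞) ^ (-ε)) ^ m < ∞ := by
    rw [ENNReal.tsum_geometric]
    exact ENNReal.inv_lt_top.2 (tsub_pos_of_lt hlt)
  simp only [hpow]
  rw [tsum_of_nat_of_neg_add_one ENNReal.summable ENNReal.summable]
  refine ENNReal.add_lt_top.2 ⟨by simpa using hgeom, lt_of_le_of_lt ?_ hgeom⟩
  refine ENNReal.tsum_le_tsum fun m => ?_
  rw [show (-((m : ℤ) + 1)).natAbs = m + 1 by omega]
  exact pow_le_pow_right_of_le_one' hlt.le (Nat.le_succ m)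

/-- The part of the estimate that belongs to a single shift `i` and a single cube. -/
theorem weighted_shift_le (n : ℕ) {p : ℝ≥0∞} (hp : p ≠ ∞) (q : ℝ≥0∞) (τ δ : ℝ)
    (g : ℤ → En n → ℝ≥0∞) (j : ℤ) (k : Fin n → ℤ) (i : ℤ) :
    (2 : ℝ≥0∞) ^ ((j : ℝ) * n * τ) * ((2 : ℝ≥0∞) ^ (-(i.natAbs : ℝ) * δ) *
      lqSumFrom q j (fun l => lpIntOn volume p (dyadicCube n j k) (g (l + i))))
      ≤ (2 : ℝ≥0∞) ^ (-(i.natAbs : ℝ) * (δ - n * τ)) * lqLpTauNorm n p q τ g := by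
  set j' : ℤ := j - (i.natAbs : ℤ) with hj'
  set k' : Fin n → ℤ := fun a => k a / 2 ^ i.natAbs
  have hshift : lqSumFrom q j (fun l => lpIntOn volume p (dyadicCube n j k) (g (l + i)))
      ≤ lqSumFrom q j' (fun l => lpIntOn volume p (dyadicCube n j' k') (g l)) :=
    lqSumFrom_shift_le q (by omega) (fun l => lpIntOn volume p (dyadicCube n j k) (g l)) _
      fun l => lpIntOn_mono_set _ hp (dyadicCube_subset_ancestor n j k i.natAbs) _
  have hnorm : (2 : ℝ≥0∞) ^ ((j' : ℝ) * n * τ) *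
      lqSumFrom q j' (fun l => lpIntOn volume p (dyadicCube n j' k') (g l))
      ≤ lqLpTauNorm n p q τ g :=
    le_iSup₂ (f := fun (j : ℤ) (k : Fin n → ℤ) => (2 : ℝ≥0∞) ^ ((j : ℝ) * n * τ) *
      lqSumFrom q j (fun l => lpIntOn volume p (dyadicCube n j k) (g l))) j' k'
  have hweight : (2 : ℝ≥0∞) ^ ((j : ℝ) * n * τ) * (2 : ℝ≥0∞) ^ (-(i.natAbs : ℝ) * δ)
      = (2 : ℝ≥0∞) ^ (-(i.natAbs : ℝ) * (δ - n * τ)) * (2 : ℝ≥0∞) ^ ((j' : ℝ) * n * τ) := by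
    rw [← ENNReal.rpow_add _ _ two_ne_zero ENNReal.ofNat_ne_top,
      ← ENNReal.rpow_add _ _ two_ne_zero ENNReal.ofNat_ne_top]
    congr 1
    rw [hj', Int.cast_sub, Int.cast_natCast]
    ring
  rw [← mul_assoc, hweight, mul_assoc]
  gcongr
  exact (mul_le_mul_right hshift _).trans hnorm

theorem stmt0 (n : ℕ) (hn : 0 < n) (p q : ℝ≥0∞) (hp0 : 0 < p) (hp : p ≠ ∞) (hq : 0 < q)
    (τ δ : ℝ) (hτ : 0 ≤ τ) (hδ : (n : ℝ) * τ < δ) :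
    ∃ C : ℝ≥0∞, 0 < C ∧ C < ∞ ∧ ∀ g : ℤ → En n → ℝ≥0∞,
      (∀ m, Measurable (g m)) →
      lqLpTauNorm n p q τ
          (fun j x => ∑' m : ℤ, (2:ℝ≥0∞) ^ (-(|(m:ℝ) - (j:ℝ)|) * δ) * g m x)
        ≤ C * lqLpTauNorm n p q τ g := by
  obtain ⟨r, hr, hr1, hrp, hrq⟩ : ∃ r : ℝ, 0 < r ∧ r ≤ 1 ∧ r ≤ p.toReal ∧
      (q ≠ ∞ → r ≤ q.toReal) := by
    have hp' : 0 < p.toReal := ENNReal.toReal_pos hp0.ne' hp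
    by_cases hq' : q = ∞
    · exact ⟨min 1 p.toReal, by positivity, min_le_left _ _, min_le_right _ _,
        fun h => absurd hq' h⟩
    · have hq'' : 0 < q.toReal := ENNReal.toReal_pos hq.ne' hq'
      exact ⟨min 1 (min p.toReal q.toReal), by positivity, min_le_left _ _,
        (min_le_right _ _).trans (min_le_left _ _),
        fun _ => (min_le_right _ _).trans (min_le_right _ _)⟩
  set w : ℤ → ℝ≥0∞ := fun i => (2 : ℝ≥0∞) ^ (-(i.natAbs : ℝ) * (δ - n * τ)) with hw
  have hS : ∑' i, w i ^ r < ∞ := by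
    simp only [hw, ← ENNReal.rpow_mul, mul_assoc]
    exact tsum_two_rpow_neg_natAbs_lt_top (mul_pos (sub_pos.2 hδ) hr)
  have hS0 : 0 < ∑' i, w i ^ r :=
    lt_of_lt_of_le (by simp [hw]) (ENNReal.le_tsum (f := fun i => w i ^ r) 0)
  refine ⟨(∑' i, w i ^ r) ^ (1 / r), ENNReal.rpow_pos hS0 hS.ne,
    ENNReal.rpow_lt_top_of_nonneg (by positivity) hS.ne, fun g hg => ?_⟩
  refine iSup₂_le fun j k => ?_
  rw [← ENNReal.rpow_le_rpow_iff hr, ENNReal.mul_rpow_of_nonneg _ _ hr.le,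
    ENNReal.mul_rpow_of_nonneg _ _ hr.le, ← ENNReal.rpow_mul _ (1 / r) r, one_div_mul_cancel hr.ne',
    ENNReal.rpow_one, ← ENNReal.tsum_mul_right]
  set c : ℤ → ℝ≥0∞ := fun i => (2 : ℝ≥0∞) ^ (-(i.natAbs : ℝ) * δ) with hc
  have hctop : ∀ i, c i ≠ ∞ := fun i =>
    ENNReal.rpow_ne_top_of_ne_zero two_ne_zero ENNReal.ofNat_ne_top
  -- The substitution `m = l + i`.
  have hG : ∀ (l : ℤ) (x : En n),
      ∑' m : ℤ, (2:ℝ≥0∞) ^ (-(|(m:ℝ) - (l:ℝ)|) * δ) * g m x = ∑' i : ℤ, c i * g (l + i) x := by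
    intro l x
    rw [← (Equiv.addLeft l).tsum_eq]
    refine tsum_congr fun i => ?_
    simp only [Equiv.coe_addLeft, hc, Nat.cast_natAbs, Int.cast_add, Int.cast_abs,
      add_sub_cancel_left]
  simp only [hG]
  have hsub := lqSumFrom_rpow_le hr hrq j
    (fun l => lpIntOn volume p (dyadicCube n j k) (fun x => ∑' i : ℤ, c i * g (l + i) x))
    (fun i l => lpIntOn volume p (dyadicCube n j k) (fun x => c i * g (l + i) x))
    fun l => lpIntOn_tsum_rpow_le volume hp hr hr1 hrp _ _ fun i => (hg _).const_mul _
  refine (mul_le_mul_right hsub _).trans ?_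
  rw [← ENNReal.tsum_mul_left]
  refine ENNReal.tsum_le_tsum fun i => ?_
  simp only [lpIntOn_const_mul volume hp0 hp _ (hctop i), lqSumFrom_const_mul hq]
  rw [← ENNReal.mul_rpow_of_nonneg _ _ hr.le, ← ENNReal.mul_rpow_of_nonneg _ _ hr.le]
  exact ENNReal.rpow_le_rpow (weighted_shift_le n hp q τ δ g j k i) hr.le
end
end

section
/- Let n ∈ ℕ, p ∈ (1,∞), q ∈ (1,∞), τ ∈ [0, 1/(p∨q)'] and δ ∈ (nτ,∞). Then there exists a constant C > 0 such that for every family {g_m}_{m∈ℤ} of measurable functions g_m : ℝⁿ → [0,∞], the functions G_j := Σ_{m∈ℤ} 2^{-|m-j|δ} g_m (j ∈ ℤ) satisfy ‖{G_j}_{j∈ℤ}‖_{~L^p_τ(ℓ^q(ℝⁿ,ℤ))} ≤ C ‖{g_m}_{m∈ℤ}‖_{~L^p_τ(ℓ^q(ℝⁿ,ℤ))}. -/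
/-!
Write `e = (p ∨ q)'` and `d = nτe`, so that `d ≤ n`, and fix `a` with `nτ < a < δ`. From a weight
`ω` admissible for `g`, build a weight `ω'` living on the dyadic heights with
`ω'(x, 2⁻ʲ) = c * sup_m 2^(-|m-j|a) ω(x, 2⁻ᵐ)` (`smoothedWeight`).

*The weight `ω'` is admissible for a suitable `c`.* Pointwise, `N ω'` is at most
`c * sup_{k ≥ 0} 2^(-ka) N_{2^k} ω`, where `N_β` is the nontangential maximal function of aperture
`β`. The level set `{N_β ω > μ}` is the union of the balls `B(y, βt)` with `ω(y, t) > μ`, and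
`{N_1 ω > μ}` is the union of the balls `B(y, t)`. Hence widening the aperture to `β` costs a
factor of order `β^d` in capacity (`hausdorffCapacity_enlarge_le`): given a covering of the
smaller union by balls `B_i`, a ball `B(y, t)` that meets some `B_i` of radius at least `t` has its
enlargement inside a multiple of `B_i`. The remaining balls are thinned out by the Vitali covering
lemma, and comparing volumes (this uses `d ≤ n`) shows that for each selected ball `t^d` is at most
the sum of `r_i^d` over the `B_i` meeting it; these `B_i` are different for different selected
balls. Countable subadditivity and homogeneity of the Choquet integral then bound the integral of
`(N ω')^e` by `c^e` times a geometric series of ratio `2^(d-ae) < 1`.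

*The norm estimate.* Since `ω'(x, 2⁻ʲ) ≥ c 2^(-|m-j|a) ω(x, 2⁻ᵐ)` for all `m`, the quotient
`G_j / ω'(·, 2⁻ʲ)` is at most `c⁻¹` times the convolution of `g_m / ω(·, 2⁻ᵐ)` with the summable
kernel `2^(-|k|(δ-a))`, and Young's inequality on `ℤ` (`tsum_conv_rpow_le`) concludes.

For `τ = 0` the capacity `hausdorffCapacity n 0` is identically infinite, because a covering is a
full sequence of balls and `0 ^ 0 = 1`; no weight is admissible and both sides are infinite.
-/

open MeasureTheory ENNReal NNReal Set

noncomputable section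

/-- The `d`-dimensional Hausdorff capacity on `ℝⁿ`: the infimum of `Σ_j r_j^d` over all
countable coverings of `E` by open balls `B(x_j, r_j)`. -/
def hausdorffCapacity (n : ℕ) (d : ℝ) (E : Set (En n)) : ℝ≥0∞ :=
  ⨅ (c : ℕ → En n × ℝ≥0) (_ : E ⊆ ⋃ i, Metric.ball (c i).1 ((c i).2 : ℝ)),
    ∑' i, ((c i).2 : ℝ≥0∞) ^ d

/-- The Choquet integral of `f : ℝⁿ → [0,∞]` against the Hausdorff capacity `H^d`:
`∫₀^∞ H^d({x : f x > λ}) dλ`. -/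
def choquetIntegral (n : ℕ) (d : ℝ) (f : En n → ℝ≥0∞) : ℝ≥0∞ :=
  ∫⁻ lam in Ioi (0:ℝ), hausdorffCapacity n d {x | ENNReal.ofReal lam < f x}

/-- The nontangential maximal function with aperture `β`:
`N_β ω (x) = sup { ω(y,t) : |y - x| < β t }`. -/
def ntMaximal (n : ℕ) (β : ℝ) (ω : En n → ℝ → ℝ≥0∞) (x : En n) : ℝ≥0∞ :=
  ⨆ (y : En n) (t : ℝ) (_ : dist y x < β * t), ω y t

/-- The conjugate exponent `m' = m/(m-1)`. -/
def conjExp (m : ℝ) : ℝ := m / (m - 1)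

/-- A weight `ω` on `ℝⁿ × (0,∞)` is admissible (for parameters `n, τ` and exponent `e`)
if `∫_{ℝⁿ} (Nω)^e dH^{nτe} ≤ 1`. -/
def isAdmissibleWeight (n : ℕ) (τ e : ℝ) (ω : En n → ℝ → ℝ≥0∞) : Prop :=
  choquetIntegral n (n * τ * e) (fun x => ntMaximal n 1 ω x ^ e) ≤ 1

/-- The quasi-norm `‖·‖_{~L^p_τ(ℓ^q(ℝⁿ,ℤ))}`. -/
def tildeLpLqNorm (n : ℕ) (p q τ : ℝ) (g : ℤ → En n → ℝ≥0∞) : ℝ≥0∞ :=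
  ⨅ (ω : En n → ℝ → ℝ≥0∞) (_ : Measurable (Function.uncurry ω))
    (_ : isAdmissibleWeight n τ (conjExp (max p q)) ω)
    (_ : ∀ (j : ℤ) (x : En n), ω x ((2:ℝ) ^ (-j)) = 0 → g j x = 0),
    (∫⁻ x,
        (∑' j : ℤ, g j x ^ q * (ω x ((2:ℝ) ^ (-j))) ^ (-q)) ^ (p / q)) ^ (1 / p)

/-! ### Hausdorff capacity -/

theorem hausdorffCapacity_mono (n : ℕ) (d : ℝ) {E F : Set (En n)} (h : E ⊆ F) :
    hausdorffCapacity n d E ≤ hausdorffCapacity n d F := by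
  unfold hausdorffCapacity
  refine le_iInf₂ fun c hc => ?_
  exact iInf₂_le c (h.trans hc)

/-- Coverings indexed by any countable type may be used: for `d > 0` they can be padded by balls of
radius zero at no cost. -/
theorem hausdorffCapacity_le_tsum (n : ℕ) {d : ℝ} (hd : 0 < d) {ι : Type*} [Countable ι]
    {E : Set (En n)} (c : ι → En n × ℝ≥0)
    (hc : E ⊆ ⋃ i, Metric.ball (c i).1 ((c i).2 : ℝ)) :
    hausdorffCapacity n d E ≤ ∑' i, ((c i).2 : ℝ≥0∞) ^ d := by
  obtain ⟨f, hf⟩ := exists_injective_nat ι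
  have key : ∑' k, (((Function.extend f c 0 k).2 : ℝ≥0) : ℝ≥0∞) ^ d
      = ∑' i, ((c i).2 : ℝ≥0∞) ^ d := by
    rw [← tsum_extend_zero hf]
    congr 1
    funext k
    by_cases hk : ∃ i, f i = k
    · obtain ⟨i, rfl⟩ := hk
      rw [hf.extend_apply, hf.extend_apply]
    · rw [Function.extend_apply' _ _ _ hk, Function.extend_apply' _ _ _ hk]
      simp [hd]
  rw [← key]
  refine iInf₂_le (Function.extend f c 0) (hc.trans ?_)
  refine iUnion_subset fun i => ?_
  refine subset_iUnion_of_subset (f i) ?_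
  rw [hf.extend_apply]

theorem hausdorffCapacity_iUnion_le (n : ℕ) {d : ℝ} (hd : 0 < d) (E : ℕ → Set (En n)) :
    hausdorffCapacity n d (⋃ k, E k) ≤ ∑' k, hausdorffCapacity n d (E k) := by
  refine ENNReal.le_of_forall_pos_le_add fun ε hε hfin => ?_
  obtain ⟨ε', hε', hsum⟩ := ENNReal.exists_pos_sum_of_countable'
    (ENNReal.coe_pos.2 hε).ne' ℕ
  have hne : ∀ k, hausdorffCapacity n d (E k) ≠ ∞ := fun k =>
    ENNReal.ne_top_of_tsum_ne_top hfin.ne k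
  have hex : ∀ k, ∃ c : ℕ → En n × ℝ≥0,
      E k ⊆ ⋃ i, Metric.ball (c i).1 ((c i).2 : ℝ) ∧
      ∑' i, ((c i).2 : ℝ≥0∞) ^ d < hausdorffCapacity n d (E k) + ε' k := by
    intro k
    have := ENNReal.lt_add_right (hne k) (hε' k).ne'
    conv_lhs at this => unfold hausdorffCapacity
    simpa only [iInf_lt_iff, exists_prop] using this
  choose c hc hlt using hex
  calc hausdorffCapacity n d (⋃ k, E k)
      ≤ ∑' z : ℕ × ℕ, ((c z.1 z.2).2 : ℝ≥0∞) ^ d := by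
        refine hausdorffCapacity_le_tsum n hd (fun z : ℕ × ℕ => c z.1 z.2) ?_
        refine iUnion_subset fun k => (hc k).trans (iUnion_subset fun i => ?_)
        exact subset_iUnion_of_subset (k, i) (subset_refl _)
    _ = ∑' k, ∑' i, ((c k i).2 : ℝ≥0∞) ^ d :=
        ENNReal.tsum_prod (f := fun k i => ((c k i).2 : ℝ≥0∞) ^ d)
    _ ≤ ∑' k, (hausdorffCapacity n d (E k) + ε' k) := ENNReal.tsum_le_tsum fun k => (hlt k).le
    _ = ∑' k, hausdorffCapacity n d (E k) + ∑' k, ε' k := ENNReal.tsum_add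
    _ ≤ _ := by gcongr

/-- A ball covered by balls of smaller radii has radius controlled, in dimension `d ≤ n`, by the
sum of the `d`-th powers of those radii; this is where `d ≤ n` enters, through volume. -/
theorem rpow_radius_le_tsum (n : ℕ) (hn : 0 < n) {d : ℝ} (hdn : d ≤ n)
    {ι : Type*} [Countable ι] (c : ι → En n × ℝ≥0) (y : En n) (t : ℝ≥0) (ht : 0 < t)
    (hc : Metric.ball y (t : ℝ) ⊆ ⋃ i, Metric.ball (c i).1 ((c i).2 : ℝ))
    (hlt : ∀ i, (c i).2 < t) :
    (t : ℝ≥0∞) ^ d ≤ ∑' i, ((c i).2 : ℝ≥0∞) ^ d := by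
  have : Nontrivial (En n) := by
    have : Nonempty (Fin n) := ⟨⟨0, hn⟩⟩
    infer_instance
  have hball : ∀ (x : En n) (r : ℝ≥0),
      volume (Metric.ball x (r : ℝ)) = (r : ℝ≥0∞) ^ (n : ℝ) * volume (Metric.ball (0 : En n) 1) := by
    intro x r
    rw [Measure.addHaar_ball volume x r.coe_nonneg]
    congr 1
    rw [finrank_euclideanSpace_fin, ENNReal.rpow_natCast, ENNReal.ofReal_pow r.coe_nonneg,
      ENNReal.ofReal_coe_nnreal]
  have hV0 : volume (Metric.ball (0 : En n) 1) ≠ 0 := (Metric.measure_ball_pos _ _ one_pos).ne'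
  have hVt : volume (Metric.ball (0 : En n) 1) ≠ ∞ := measure_ball_lt_top.ne
  have h1 : (t : ℝ≥0∞) ^ (n : ℝ) ≤ ∑' i, ((c i).2 : ℝ≥0∞) ^ (n : ℝ) := by
    have := (measure_mono hc).trans (measure_iUnion_le (μ := volume) _)
    simp only [hball] at this
    rw [ENNReal.tsum_mul_right] at this
    exact (ENNReal.mul_le_mul_iff_left hV0 hVt).1 this
  have ht0 : (t : ℝ≥0∞) ≠ 0 := by exact_mod_cast ht.ne'
  have htt : (t : ℝ≥0∞) ≠ ∞ := ENNReal.coe_ne_top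
  have hs : (n : ℝ) = d + (n - d) := by ring
  have h2 : ∀ i, ((c i).2 : ℝ≥0∞) ^ (n : ℝ) ≤ ((c i).2 : ℝ≥0∞) ^ d * (t : ℝ≥0∞) ^ ((n : ℝ) - d) := by
    intro i
    rcases eq_or_ne ((c i).2) 0 with h0 | h0
    · have : (0 : ℝ) < n := by exact_mod_cast hn
      rw [h0, ENNReal.coe_zero, ENNReal.zero_rpow_of_pos this]
      exact zero_le
    · conv_lhs => rw [hs, ENNReal.rpow_add _ _ (by exact_mod_cast h0) ENNReal.coe_ne_top]
      gcongr
      exact (hlt i).le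
  have h3 := h1.trans (ENNReal.tsum_le_tsum h2)
  rw [ENNReal.tsum_mul_right] at h3
  conv_lhs at h3 => rw [hs, ENNReal.rpow_add _ _ ht0 htt]
  refine (ENNReal.mul_le_mul_iff_left ?_ ?_).1 h3
  · simp [ENNReal.rpow_eq_zero_iff, ht0, htt]
  · simp [ENNReal.rpow_eq_top_iff, ht0, htt]

/-- Enlarging every ball of a family by a factor `β` raises the capacity of the union by at most
a factor of order `β ^ d`. -/
theorem hausdorffCapacity_enlarge_le (n : ℕ) (hn : 0 < n) {d : ℝ} (hd : 0 < d) (hdn : d ≤ n)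
    (β : ℝ≥0) (hβ : 1 ≤ β) (S : Set (En n × ℝ≥0)) (hS : ∀ a ∈ S, 0 < a.2) :
    hausdorffCapacity n d (⋃ a ∈ S, Metric.ball a.1 ((β * a.2 : ℝ≥0) : ℝ))
      ≤ 2 * (11 * (β : ℝ≥0∞)) ^ d *
        hausdorffCapacity n d (⋃ a ∈ S, Metric.ball a.1 (a.2 : ℝ)) := by
  have hK0 : 2 * (11 * (β : ℝ≥0∞)) ^ d ≠ 0 := by
    have : (β : ℝ≥0∞) ≠ 0 := by exact_mod_cast (zero_lt_one.trans_le hβ).ne'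
    simp [hd, this, hd.not_gt]
  have hKt : 2 * (11 * (β : ℝ≥0∞)) ^ d ≠ ∞ :=
    ENNReal.mul_ne_top (by simp)
      (ENNReal.rpow_ne_top_of_nonneg hd.le (ENNReal.mul_ne_top (by simp) (by simp)))
  rw [mul_comm, ← ENNReal.div_le_iff hK0 hKt]
  refine le_iInf₂ fun c hc => ?_
  rw [ENNReal.div_le_iff hK0 hKt]
  rcases eq_or_ne (∑' i, ((c i).2 : ℝ≥0∞) ^ d) ∞ with htop | hfin
  · rw [htop, ENNReal.top_mul hK0]; exact le_top
  -- The balls of `S` that meet no covering ball at least as large as themselves.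
  let T : Set (En n × ℝ≥0) := {a ∈ S | ∀ i,
    (Metric.ball a.1 (a.2 : ℝ) ∩ Metric.ball (c i).1 ((c i).2 : ℝ)).Nonempty → (c i).2 < a.2}
  let J : En n × ℝ≥0 → Set ℕ := fun a =>
    {i | (Metric.ball a.1 (a.2 : ℝ) ∩ Metric.ball (c i).1 ((c i).2 : ℝ)).Nonempty}
  have hT : ∀ a ∈ T, (a.2 : ℝ≥0∞) ^ d ≤ ∑' i : J a, ((c i).2 : ℝ≥0∞) ^ d := by
    intro a ha
    refine rpow_radius_le_tsum n hn hdn (fun i : J a => c i) a.1 a.2 (hS a ha.1) ?_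
      (fun i => ha.2 i i.2)
    intro x hx
    obtain ⟨i, hi⟩ := mem_iUnion.1 (hc (mem_iUnion₂.2 ⟨a, ha.1, hx⟩))
    exact mem_iUnion.2 ⟨⟨i, ⟨x, hx, hi⟩⟩, hi⟩
  have hbdd : ∀ a ∈ T, (a.2 : ℝ) ≤ ((∑' i, ((c i).2 : ℝ≥0∞) ^ d) ^ (1 / d)).toReal := by
    intro a ha
    have h1 := (hT a ha).trans
      (ENNReal.tsum_comp_le_tsum_of_injective Subtype.val_injective
        (fun i => ((c i).2 : ℝ≥0∞) ^ d))
    have h2 : (a.2 : ℝ≥0∞) ≤ (∑' i, ((c i).2 : ℝ≥0∞) ^ d) ^ (1 / d) := by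
      rw [one_div]; exact (ENNReal.le_rpow_inv_iff hd).2 h1
    have := ENNReal.toReal_mono (ENNReal.rpow_ne_top_of_nonneg (by positivity) hfin) h2
    simpa using this
  obtain ⟨u, huT, hdisj, hu⟩ := Vitali.exists_disjoint_subfamily_covering_enlargement
    (fun a : En n × ℝ≥0 => Metric.ball a.1 (3 * (a.2 : ℝ))) T (fun a => (a.2 : ℝ)) 2
    (by norm_num) (fun a _ => a.2.2) _ hbdd
    (fun a ha => Metric.nonempty_ball.2 (mul_pos three_pos (by exact_mod_cast hS a ha.1)))
  have hucount : u.Countable := hdisj.countable_of_isOpen (fun a _ => Metric.isOpen_ball)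
    (fun a ha => Metric.nonempty_ball.2
      (mul_pos three_pos (by exact_mod_cast hS a (huT ha).1)))
  have : Countable u := hucount.to_subtype
  -- Covering balls meeting different members of `u` are different, as they lie in the disjoint
  -- threefold enlargements.
  have hsumu : ∑' a : u, (a.1.2 : ℝ≥0∞) ^ d ≤ ∑' i, ((c i).2 : ℝ≥0∞) ^ d := by
    calc ∑' a : u, (a.1.2 : ℝ≥0∞) ^ d
        ≤ ∑' a : u, ∑' i : J a.1, ((c i).2 : ℝ≥0∞) ^ d :=
          ENNReal.tsum_le_tsum fun a => hT a.1 (huT a.2)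
      _ = ∑' z : (Σ a : u, J a.1), ((c z.2).2 : ℝ≥0∞) ^ d :=
          (ENNReal.tsum_sigma (fun (a : u) (i : J a.1) => ((c i).2 : ℝ≥0∞) ^ d)).symm
      _ ≤ ∑' i, ((c i).2 : ℝ≥0∞) ^ d := by
          refine ENNReal.tsum_comp_le_tsum_of_injective
            (f := fun z : (Σ a : u, J a.1) => (z.2 : ℕ)) ?_ (fun i => ((c i).2 : ℝ≥0∞) ^ d)
          rintro ⟨a, i, hi⟩ ⟨b, j, hj⟩ hij
          obtain rfl : i = j := hij
          have hsub : ∀ a : u, i ∈ J a.1 → (c i).1 ∈ Metric.ball a.1.1 (3 * (a.1.2 : ℝ)) := by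
            rintro a ⟨x, hx1, hx2⟩
            have hlt : ((c i).2 : ℝ) < a.1.2 := by
              exact_mod_cast (huT a.2).2 i ⟨x, hx1, hx2⟩
            rw [Metric.mem_ball] at *
            have := dist_triangle_left (c i).1 a.1.1 x
            have hp : (0 : ℝ) ≤ a.1.2 := a.1.2.2
            linarith
          have hab : a = b := by
            by_contra hne
            exact Set.disjoint_left.1 (hdisj a.2 b.2 (fun h => hne (Subtype.ext h)))
              (hsub a hi) (hsub b hj)
          subst hab
          rfl
  have hβ' : (1 : ℝ) ≤ β := by exact_mod_cast hβ
  let c' : ℕ ⊕ u → En n × ℝ≥0 :=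
    Sum.elim (fun i => ((c i).1, 11 * β * (c i).2)) (fun a => (a.1.1, 11 * β * a.1.2))
  have hcov : (⋃ a ∈ S, Metric.ball a.1 ((β * a.2 : ℝ≥0) : ℝ))
      ⊆ ⋃ i, Metric.ball (c' i).1 ((c' i).2 : ℝ) := by
    refine iUnion₂_subset fun a ha x hx => ?_
    rw [Metric.mem_ball] at hx
    push_cast at hx
    have ha0 : (0 : ℝ) ≤ a.2 := a.2.2
    by_cases haT : a ∈ T
    · obtain ⟨b, hb, ⟨z, hz1, hz2⟩, hab⟩ := hu a haT
      refine mem_iUnion.2 ⟨Sum.inr ⟨b, hb⟩, ?_⟩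
      simp only [c', Sum.elim_inr, Metric.mem_ball] at hz1 hz2 hab ⊢
      push_cast
      have h1 := dist_triangle4 x a.1 z b.1
      rw [dist_comm a.1 z] at h1
      have hb0 : (0 : ℝ) ≤ b.2 := b.2.2
      nlinarith [mul_le_mul_of_nonneg_left hab (zero_le_one.trans hβ'),
        mul_le_mul_of_nonneg_right hβ' hb0]
    · have : ∃ i, (Metric.ball a.1 (a.2 : ℝ) ∩ Metric.ball (c i).1 ((c i).2 : ℝ)).Nonempty ∧
          a.2 ≤ (c i).2 := by
        by_contra! hcon
        exact haT ⟨ha, hcon⟩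
      obtain ⟨i, ⟨z, hz1, hz2⟩, hle⟩ := this
      refine mem_iUnion.2 ⟨Sum.inl i, ?_⟩
      simp only [c', Sum.elim_inl, Metric.mem_ball] at hz1 hz2 ⊢
      push_cast
      have h1 := dist_triangle4 x a.1 z (c i).1
      rw [dist_comm a.1 z] at h1
      have hle' : (a.2 : ℝ) ≤ (c i).2 := by exact_mod_cast hle
      have hc0 : (0 : ℝ) ≤ (c i).2 := (c i).2.2
      nlinarith [mul_le_mul_of_nonneg_left hle' (zero_le_one.trans hβ'),
        mul_le_mul_of_nonneg_right hβ' hc0]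
  refine (hausdorffCapacity_le_tsum n hd c' hcov).trans ?_
  rw [ENNReal.summable.tsum_sum ENNReal.summable]
  simp only [c', Sum.elim_inl, Sum.elim_inr, ENNReal.coe_mul, ENNReal.coe_ofNat]
  simp only [ENNReal.mul_rpow_of_nonneg _ _ hd.le, ENNReal.tsum_mul_left]
  rw [← ENNReal.mul_rpow_of_nonneg _ _ hd.le]
  calc _ ≤ (11 * (β : ℝ≥0∞)) ^ d * (∑' i, ((c i).2 : ℝ≥0∞) ^ d)
        + (11 * (β : ℝ≥0∞)) ^ d * (∑' i, ((c i).2 : ℝ≥0∞) ^ d) := by gcongr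
    _ = _ := by ring

/-! ### Choquet integrals and nontangential maximal functions -/

theorem antitone_hausdorffCapacity_lt (n : ℕ) (d : ℝ) (f : En n → ℝ≥0∞) :
    Antitone fun lam : ℝ => hausdorffCapacity n d {x | ENNReal.ofReal lam < f x} :=
  fun _ _ h => hausdorffCapacity_mono n d fun _ hx =>
    lt_of_le_of_lt (ENNReal.ofReal_le_ofReal h) hx

theorem choquetIntegral_mono (n : ℕ) (d : ℝ) {f g : En n → ℝ≥0∞} (h : ∀ x, f x ≤ g x) :
    choquetIntegral n d f ≤ choquetIntegral n d g :=
  lintegral_mono fun _ => hausdorffCapacity_mono n d fun x hx => lt_of_lt_of_le hx (h x)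

theorem choquetIntegral_iSup_le (n : ℕ) {d : ℝ} (hd : 0 < d) (F : ℕ → En n → ℝ≥0∞) :
    choquetIntegral n d (fun x => ⨆ k, F k x) ≤ ∑' k, choquetIntegral n d (F k) := by
  unfold choquetIntegral
  rw [← lintegral_tsum fun k => (antitone_hausdorffCapacity_lt n d (F k)).measurable.aemeasurable]
  refine lintegral_mono fun lam => ?_
  refine le_trans (hausdorffCapacity_mono n d ?_) (hausdorffCapacity_iUnion_le n hd _)
  intro x hx
  rw [mem_ofPred_eq, lt_iSup_iff] at hx
  obtain ⟨k, hk⟩ := hx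
  exact mem_iUnion.2 ⟨k, hk⟩

theorem choquetIntegral_const_mul (n : ℕ) (d : ℝ) (f : En n → ℝ≥0∞) {c : ℝ≥0∞}
    (hc0 : c ≠ 0) (hct : c ≠ ∞) :
    choquetIntegral n d (fun x => c * f x) = c * choquetIntegral n d f := by
  set a : ℝ := c.toReal with ha
  have ha0 : 0 < a := ENNReal.toReal_pos hc0 hct
  have hca : c = ENNReal.ofReal a := (ENNReal.ofReal_toReal hct).symm
  have hset : ∀ lam : ℝ, {x | ENNReal.ofReal lam < c * f x}
      = {x | ENNReal.ofReal (a⁻¹ * lam) < f x} := by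
    intro lam
    ext x
    simp only [mem_ofPred_eq]
    rw [ENNReal.ofReal_mul (by positivity), ENNReal.ofReal_inv_of_pos ha0, ← hca,
      mul_comm c⁻¹, ← div_eq_mul_inv, ENNReal.div_lt_iff (Or.inl hc0) (Or.inl hct), mul_comm]
  unfold choquetIntegral
  simp only [hset]
  set φ : ℝ → ℝ≥0∞ := fun lam => hausdorffCapacity n d {x | ENNReal.ofReal lam < f x} with hφ
  have hφm : Measurable φ := (antitone_hausdorffCapacity_lt n d f).measurable
  have hmap := Real.map_volume_mul_left (a := a⁻¹) (inv_ne_zero ha0.ne')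
  rw [inv_inv, abs_of_pos ha0, ← hca] at hmap
  rw [← lintegral_indicator measurableSet_Ioi, ← lintegral_indicator measurableSet_Ioi]
  have hind : ∀ lam, (Ioi (0:ℝ)).indicator (fun l => φ (a⁻¹ * l)) lam
      = (Ioi (0:ℝ)).indicator φ (a⁻¹ * lam) := by
    intro lam
    simp only [indicator, mem_Ioi]
    congr 1
    simp [inv_pos.2 ha0]
  change ∫⁻ lam, (Ioi (0:ℝ)).indicator (fun l => φ (a⁻¹ * l)) lam = _
  simp only [hind]
  rw [← lintegral_map (hφm.indicator measurableSet_Ioi) (measurable_const_mul a⁻¹), hmap,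
    lintegral_smul_measure, smul_eq_mul]

/-- Widening the aperture from `1` to `β` enlarges by the factor `β` all the balls making up a level
set of the nontangential maximal function. -/
theorem hausdorffCapacity_ntMaximal_le (n : ℕ) (hn : 0 < n) {d : ℝ} (hd : 0 < d) (hdn : d ≤ n)
    (β : ℝ≥0) (hβ : 1 ≤ β) (ω : En n → ℝ → ℝ≥0∞) (μ : ℝ≥0∞) :
    hausdorffCapacity n d {x | μ < ntMaximal n β ω x}
      ≤ 2 * (11 * (β : ℝ≥0∞)) ^ d * hausdorffCapacity n d {x | μ < ntMaximal n 1 ω x} := by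
  have hlevel : ∀ β : ℝ≥0, 0 < β → {x | μ < ntMaximal n β ω x} =
      ⋃ a ∈ {a : En n × ℝ≥0 | 0 < a.2 ∧ μ < ω a.1 a.2},
        Metric.ball a.1 ((β * a.2 : ℝ≥0) : ℝ) := by
    intro β hβ
    have hβ' : (0 : ℝ) < β := by exact_mod_cast hβ
    ext x
    simp only [ntMaximal, mem_ofPred_eq, lt_iSup_iff, mem_iUnion, Metric.mem_ball, exists_prop,
      NNReal.coe_mul]
    constructor
    · rintro ⟨y, t, hyt, hμ⟩
      have ht : 0 < t := (mul_pos_iff_of_pos_left hβ').1 (dist_nonneg.trans_lt hyt)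
      exact ⟨(y, ⟨t, ht.le⟩), ⟨by exact_mod_cast ht, hμ⟩, by rw [dist_comm]; exact hyt⟩
    · rintro ⟨⟨y, t⟩, ⟨_, hμ⟩, hyt⟩
      exact ⟨y, t, by rw [dist_comm]; exact hyt, hμ⟩
  have h1 := hlevel 1 one_pos
  rw [NNReal.coe_one] at h1
  rw [hlevel β (one_pos.trans_le hβ), h1]
  simpa only [one_mul] using hausdorffCapacity_enlarge_le n hn hd hdn β hβ _ (fun a ha => ha.1)

theorem choquetIntegral_ntMaximal_le (n : ℕ) (hn : 0 < n) {d e : ℝ} (hd : 0 < d) (hdn : d ≤ n)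
    (he : 0 < e) (β : ℝ≥0) (hβ : 1 ≤ β) (ω : En n → ℝ → ℝ≥0∞) :
    choquetIntegral n d (fun x => ntMaximal n β ω x ^ e)
      ≤ 2 * (11 * (β : ℝ≥0∞)) ^ d * choquetIntegral n d (fun x => ntMaximal n 1 ω x ^ e) := by
  have hKt : 2 * (11 * (β : ℝ≥0∞)) ^ d ≠ ∞ :=
    ENNReal.mul_ne_top (by simp)
      (ENNReal.rpow_ne_top_of_nonneg hd.le (ENNReal.mul_ne_top (by simp) (by simp)))
  unfold choquetIntegral
  rw [← lintegral_const_mul' _ _ hKt]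
  refine lintegral_mono fun lam => ?_
  simp only [← ENNReal.rpow_inv_lt_iff he]
  exact hausdorffCapacity_ntMaximal_le n hn hd hdn β hβ ω _

/-! ### Series inequalities -/

/-- The weighted power mean inequality for series. -/
theorem tsum_mul_rpow_le {ι : Type*} {q : ℝ} (hq : 1 < q) (w f : ι → ℝ≥0∞) :
    (∑' i, w i * f i) ^ q ≤ (∑' i, w i) ^ (q - 1) * ∑' i, w i * f i ^ q := by
  have hq0 : 0 < q := by linarith
  rw [← ENNReal.le_rpow_inv_iff hq0, ENNReal.tsum_eq_iSup_sum]
  refine iSup_le fun s => ?_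
  refine (ENNReal.inner_le_weight_mul_Lp_of_nonneg s hq.le w f).trans ?_
  rw [ENNReal.mul_rpow_of_nonneg _ _ (inv_nonneg.2 hq0.le), ← ENNReal.rpow_mul]
  have : (q - 1) * q⁻¹ = 1 - q⁻¹ := by field_simp
  rw [this]
  have : 0 ≤ 1 - q⁻¹ := sub_nonneg.2 (inv_le_one_of_one_le₀ hq.le)
  gcongr
  · exact ENNReal.sum_le_tsum s
  · exact ENNReal.sum_le_tsum s

/-- Young's convolution inequality `ℓ¹ * ℓ^q ⊆ ℓ^q` on `ℤ`. -/
theorem tsum_conv_rpow_le {q : ℝ} (hq : 1 < q) (b : ℤ → ℝ≥0∞) (h : ℤ → ℝ≥0∞) :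
    ∑' j : ℤ, (∑' m : ℤ, b (m - j) * h m) ^ q ≤ (∑' k, b k) ^ q * ∑' m, h m ^ q := by
  have hB : ∀ j : ℤ, ∑' m : ℤ, b (m - j) = ∑' k, b k := fun j =>
    (Equiv.subRight j).tsum_eq b
  have hB' : ∀ m : ℤ, ∑' j : ℤ, b (m - j) = ∑' k, b k := fun m =>
    (Equiv.subLeft m).tsum_eq b
  calc ∑' j : ℤ, (∑' m : ℤ, b (m - j) * h m) ^ q
      ≤ ∑' j : ℤ, (∑' k, b k) ^ (q - 1) * ∑' m : ℤ, b (m - j) * h m ^ q := by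
        refine ENNReal.tsum_le_tsum fun j => ?_
        have := tsum_mul_rpow_le hq (fun m => b (m - j)) h
        rwa [hB] at this
    _ = (∑' k, b k) ^ (q - 1) * ((∑' k, b k) * ∑' m, h m ^ q) := by
        rw [ENNReal.tsum_mul_left, ENNReal.tsum_comm]
        simp only [ENNReal.tsum_mul_right, hB', ENNReal.tsum_mul_left]
    _ = (∑' k, b k) ^ q * ∑' m, h m ^ q := by
        rw [← mul_assoc]
        congr 1
        conv_lhs => rw [← ENNReal.rpow_one (∑' k, b k), ← ENNReal.rpow_mul]
        rw [← ENNReal.rpow_add_of_nonneg _ _ (by linarith) (by norm_num)]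
        congr 1
        ring

theorem tsum_two_rpow_neg_nat_lt_top {s : ℝ} (hs : 0 < s) :
    ∑' k : ℕ, (2 : ℝ≥0∞) ^ (-(k : ℝ) * s) < ∞ := by
  have : ∀ k : ℕ, (2 : ℝ≥0∞) ^ (-(k : ℝ) * s) = ((2 : ℝ≥0∞) ^ (-s)) ^ k := by
    intro k
    rw [← ENNReal.rpow_natCast, ← ENNReal.rpow_mul]
    congr 1
    ring
  simp only [this]
  rw [ENNReal.tsum_geometric, ENNReal.inv_lt_top, tsub_pos_iff_lt]
  exact ENNReal.rpow_lt_one_of_one_lt_of_neg (by norm_num) (by linarith)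

theorem tsum_two_rpow_neg_abs_lt_top {s : ℝ} (hs : 0 < s) :
    ∑' k : ℤ, (2 : ℝ≥0∞) ^ (-|(k : ℝ)| * s) < ∞ := by
  have hnat := tsum_two_rpow_neg_nat_lt_top hs
  rw [tsum_of_nat_of_neg_add_one ENNReal.summable ENNReal.summable]
  refine ENNReal.add_lt_top.2 ⟨?_, lt_of_le_of_lt (ENNReal.tsum_le_tsum fun k => ?_) hnat⟩
  · simpa using hnat
  · refine ENNReal.rpow_le_rpow_of_exponent_le (by norm_num) ?_
    push_cast
    rw [abs_neg, abs_of_nonneg (by positivity)]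
    nlinarith

/-! ### The smoothed weight -/

/-- The weight carried by the dyadic heights `t = 2⁻ʲ` whose value there is
`c * sup_m 2^(-|m-j|a) ω(x, 2⁻ᵐ)`; it vanishes at all other heights. -/
def smoothedWeight (n : ℕ) (a : ℝ) (c : ℝ≥0∞) (ω : En n → ℝ → ℝ≥0∞) (x : En n) (t : ℝ) : ℝ≥0∞ :=
  ⨆ (j : ℤ) (m : ℤ), if t = (2:ℝ) ^ (-j) then
    c * ((2:ℝ≥0∞) ^ (-|(m:ℝ) - (j:ℝ)| * a) * ω x ((2:ℝ) ^ (-m))) else 0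

theorem measurable_smoothedWeight (n : ℕ) (a : ℝ) (c : ℝ≥0∞) {ω : En n → ℝ → ℝ≥0∞}
    (hω : Measurable (Function.uncurry ω)) :
    Measurable (Function.uncurry (smoothedWeight n a c ω)) := by
  refine Measurable.iSup fun j => Measurable.iSup fun m => ?_
  refine Measurable.ite (measurableSet_eq_fun measurable_snd measurable_const) ?_ measurable_const
  refine Measurable.const_mul (Measurable.const_mul ?_ _) _
  exact hω.comp (measurable_fst.prodMk measurable_const)

theorem le_smoothedWeight (n : ℕ) (a : ℝ) (c : ℝ≥0∞) (ω : En n → ℝ → ℝ≥0∞) (x : En n)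
    (j m : ℤ) :
    c * ((2:ℝ≥0∞) ^ (-|(m:ℝ) - (j:ℝ)| * a) * ω x ((2:ℝ) ^ (-m)))
      ≤ smoothedWeight n a c ω x ((2:ℝ) ^ (-j)) := by
  refine le_iSup₂_of_le j m ?_
  rw [if_pos rfl]

theorem ntMaximal_smoothedWeight_le (n : ℕ) {a : ℝ} (ha : 0 ≤ a) (c : ℝ≥0∞)
    (ω : En n → ℝ → ℝ≥0∞) (x : En n) :
    ntMaximal n 1 (smoothedWeight n a c ω) x
      ≤ ⨆ k : ℕ, c * ((2:ℝ≥0∞) ^ (-(k:ℝ) * a) * ntMaximal n ((2 ^ k : ℝ≥0) : ℝ) ω x) := by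
  refine iSup_le fun y => iSup₂_le fun t hyt => iSup₂_le fun j m => ?_
  split_ifs with ht
  swap
  · exact zero_le
  subst ht
  rw [one_mul] at hyt
  rcases le_total m j with hmj | hjm
  -- A larger height: `(y, 2⁻ᵐ)` lies in the cone of aperture one over `x`.
  · refine le_iSup_of_le 0 ?_
    gcongr
    · norm_num
    · simp only [Nat.cast_zero]
      have := abs_nonneg ((m:ℝ) - j)
      linarith
    · refine le_iSup₂_of_le y ((2:ℝ) ^ (-m)) (le_iSup_of_le ?_ le_rfl)
      refine hyt.trans_le ?_
      simp only [pow_zero, NNReal.coe_one, one_mul]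
      exact zpow_le_zpow_right₀ (by norm_num) (by omega)
  -- A smaller height: `(y, 2⁻ᵐ)` lies in the cone of aperture `2^(m-j)` over `x`.
  · obtain ⟨k, rfl⟩ := Int.le.dest hjm
    refine le_iSup_of_le k ?_
    have habs : |(((j + (k:ℤ) : ℤ)) : ℝ) - (j:ℝ)| = k := by
      push_cast
      rw [add_sub_cancel_left, abs_of_nonneg (by positivity)]
    rw [habs]
    gcongr
    refine le_iSup₂_of_le y ((2:ℝ) ^ (-(j + (k:ℤ)))) (le_iSup_of_le ?_ le_rfl)
    refine hyt.trans_le (le_of_eq ?_)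
    push_cast
    rw [← zpow_natCast, ← zpow_add₀ (by norm_num)]
    congr 1
    ring

/-- The sum over `k` of `2^(-kae)` times the constant of `choquetIntegral_ntMaximal_le` at aperture
`2^k`; it bounds the Choquet integral of `(N ω')^e` for the smoothed weight `ω'` with `c = 1`. -/
def weightConst (a d e : ℝ) : ℝ≥0∞ :=
  ∑' k : ℕ, (2:ℝ≥0∞) ^ (-(k:ℝ) * (a * e)) * (2 * (11 * ((2 ^ k : ℝ≥0) : ℝ≥0∞)) ^ d)

theorem weightConst_lt_top {a d e : ℝ} (hd : 0 < d) (h : d < a * e) : weightConst a d e < ∞ := by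
  have hterm : ∀ k : ℕ, (2:ℝ≥0∞) ^ (-(k:ℝ) * (a * e)) * (2 * (11 * ((2 ^ k : ℝ≥0) : ℝ≥0∞)) ^ d)
      = 2 * 11 ^ d * (2:ℝ≥0∞) ^ (-(k:ℝ) * (a * e - d)) := by
    intro k
    have h2 : ((2 ^ k : ℝ≥0) : ℝ≥0∞) ^ d = (2:ℝ≥0∞) ^ ((k:ℝ) * d) := by
      rw [ENNReal.rpow_mul, ENNReal.rpow_natCast]
      push_cast
      rfl
    have h3 : -(k:ℝ) * (a * e - d) = -(k:ℝ) * (a * e) + (k:ℝ) * d := by ring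
    rw [ENNReal.mul_rpow_of_nonneg _ _ hd.le, h2, h3,
      ENNReal.rpow_add _ _ (by norm_num) (by norm_num)]
    ring
  unfold weightConst
  simp only [hterm]
  rw [ENNReal.tsum_mul_left]
  refine ENNReal.mul_lt_top (ENNReal.mul_lt_top (by norm_num) ?_)
    (tsum_two_rpow_neg_nat_lt_top (by linarith))
  exact ENNReal.rpow_lt_top_of_nonneg hd.le (by norm_num)

theorem weightConst_pos (a d e : ℝ) : 0 < weightConst a d e := by
  refine lt_of_lt_of_le ?_ (ENNReal.le_tsum 0)
  have : (0 : ℝ≥0∞) < 11 ^ d := ENNReal.rpow_pos (by norm_num) (by norm_num)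
  simpa using this

theorem isAdmissibleWeight_smoothedWeight (n : ℕ) (hn : 0 < n) {a τ e : ℝ} (ha : 0 ≤ a)
    (he : 0 < e) (hd : 0 < n * τ * e) (hdn : n * τ * e ≤ n) (hda : n * τ * e < a * e)
    {ω : En n → ℝ → ℝ≥0∞} (hω : isAdmissibleWeight n τ e ω) :
    isAdmissibleWeight n τ e
      (smoothedWeight n a (weightConst a (n * τ * e) e ^ (-e⁻¹)) ω) := by
  unfold isAdmissibleWeight at *
  set d := n * τ * e
  set K := weightConst a d e with hK
  have hKt : K ≠ ∞ := (weightConst_lt_top hd hda).ne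
  have hK0 : K ≠ 0 := (weightConst_pos _ _ _).ne'
  have hcoef : ∀ k : ℕ, (2:ℝ≥0∞) ^ (-(k:ℝ) * (a * e)) ≠ 0 ∧ (2:ℝ≥0∞) ^ (-(k:ℝ) * (a * e)) ≠ ∞ :=
    fun k => ⟨(ENNReal.rpow_pos (by norm_num) (by norm_num)).ne',
      ENNReal.rpow_ne_top_of_ne_zero (by norm_num) (by norm_num)⟩
  calc choquetIntegral n d (fun x => ntMaximal n 1 (smoothedWeight n a (K ^ (-e⁻¹)) ω) x ^ e)
      ≤ choquetIntegral n d (fun x => ⨆ k : ℕ, (K⁻¹ * (2:ℝ≥0∞) ^ (-(k:ℝ) * (a * e))) *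
          ntMaximal n ((2 ^ k : ℝ≥0) : ℝ) ω x ^ e) := by
        refine choquetIntegral_mono n d fun x => ?_
        refine (ENNReal.rpow_le_rpow (ntMaximal_smoothedWeight_le n ha _ ω x) he.le).trans ?_
        rw [← ENNReal.le_rpow_inv_iff he]
        refine iSup_le fun k => ?_
        rw [ENNReal.le_rpow_inv_iff he]
        refine le_iSup_of_le k (le_of_eq ?_)
        rw [ENNReal.mul_rpow_of_nonneg _ _ he.le, ENNReal.mul_rpow_of_nonneg _ _ he.le,
          ← ENNReal.rpow_mul, ← ENNReal.rpow_mul, neg_mul, inv_mul_cancel₀ he.ne',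
          ENNReal.rpow_neg_one, mul_assoc (-(k:ℝ)), mul_assoc]
    _ ≤ ∑' k : ℕ, choquetIntegral n d (fun x => (K⁻¹ * (2:ℝ≥0∞) ^ (-(k:ℝ) * (a * e))) *
          ntMaximal n ((2 ^ k : ℝ≥0) : ℝ) ω x ^ e) := choquetIntegral_iSup_le n hd _
    _ ≤ ∑' k : ℕ, K⁻¹ * ((2:ℝ≥0∞) ^ (-(k:ℝ) * (a * e)) *
          (2 * (11 * ((2 ^ k : ℝ≥0) : ℝ≥0∞)) ^ d)) := by
        refine ENNReal.tsum_le_tsum fun k => ?_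
        rw [choquetIntegral_const_mul n d _
          (mul_ne_zero (ENNReal.inv_ne_zero.2 hKt) (hcoef k).1)
          (ENNReal.mul_ne_top (ENNReal.inv_ne_top.2 hK0) (hcoef k).2), mul_assoc]
        gcongr
        refine (choquetIntegral_ntMaximal_le n hn hd hdn he (2 ^ k)
          (one_le_pow₀ (by norm_num)) ω).trans ?_
        exact (mul_le_mul_right hω _).trans (mul_one _).le
    _ = K⁻¹ * K := by rw [ENNReal.tsum_mul_left]; rfl
    _ = 1 := ENNReal.inv_mul_cancel hK0 hKt

/-! ### The norm estimate -/

/-- With the convention `0 ^ 0 = 1`, every sequence of radii contributes infinitely much to the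
zero-dimensional capacity, which is therefore identically infinite. -/
theorem hausdorffCapacity_zero (n : ℕ) (E : Set (En n)) : hausdorffCapacity n 0 E = ∞ := by
  simp [hausdorffCapacity]

theorem not_isAdmissibleWeight_zero (n : ℕ) (e : ℝ) (ω : En n → ℝ → ℝ≥0∞) :
    ¬ isAdmissibleWeight n 0 e ω := by
  simp [isAdmissibleWeight, choquetIntegral, hausdorffCapacity_zero]

/-- The pointwise estimate: dividing by the smoothed weight turns the sums `G_j` into convolutions
of `g_m / ω(·, 2⁻ᵐ)` with a summable kernel. -/
theorem tsum_smoothed_le (n : ℕ) {q a δ : ℝ} (hq : 1 < q) {c : ℝ≥0∞} (hc0 : c ≠ 0)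
    (hct : c ≠ ∞) (ω : En n → ℝ → ℝ≥0∞) (g : ℤ → En n → ℝ≥0∞) (x : En n) :
    ∑' j : ℤ, (∑' m : ℤ, (2:ℝ≥0∞) ^ (-(|(m:ℝ) - (j:ℝ)|) * δ) * g m x) ^ q *
        (smoothedWeight n a c ω x ((2:ℝ) ^ (-j))) ^ (-q)
      ≤ (c⁻¹ * ∑' k : ℤ, (2:ℝ≥0∞) ^ (-|(k:ℝ)| * (δ - a))) ^ q *
        ∑' j : ℤ, g j x ^ q * (ω x ((2:ℝ) ^ (-j))) ^ (-q) := by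
  have hq0 : 0 ≤ q := by linarith
  have hpow : ∀ u v : ℝ≥0∞, u ^ q * v ^ (-q) = (u * v⁻¹) ^ q := by
    intro u v
    rw [ENNReal.mul_rpow_of_nonneg _ _ hq0, ENNReal.inv_rpow, ENNReal.rpow_neg]
  simp only [hpow]
  calc _ ≤ ∑' j : ℤ, (c⁻¹ * ∑' m : ℤ, (2:ℝ≥0∞) ^ (-|((m - j : ℤ) : ℝ)| * (δ - a)) *
          (g m x * (ω x ((2:ℝ) ^ (-m)))⁻¹)) ^ q := by
        refine ENNReal.tsum_le_tsum fun j => ENNReal.rpow_le_rpow ?_ hq0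
        rw [← ENNReal.tsum_mul_right, ← ENNReal.tsum_mul_left]
        refine ENNReal.tsum_le_tsum fun m => ?_
        have hz : ∀ r : ℝ, (2:ℝ≥0∞) ^ r ≠ 0 :=
          fun r => (ENNReal.rpow_pos (by norm_num) (by norm_num)).ne'
        have ht : ∀ r : ℝ, (2:ℝ≥0∞) ^ r ≠ ∞ :=
          fun r => ENNReal.rpow_ne_top_of_ne_zero (by norm_num) (by norm_num)
        have h1 := ENNReal.inv_le_inv.2 (le_smoothedWeight n a c ω x j m)
        rw [ENNReal.mul_inv (Or.inl hc0) (Or.inl hct),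
          ENNReal.mul_inv (Or.inl (hz _)) (Or.inl (ht _)), ← ENNReal.rpow_neg] at h1
        refine (mul_le_mul_right h1 _).trans (le_of_eq ?_)
        push_cast
        have h3 : -|(m:ℝ) - (j:ℝ)| * (δ - a)
            = -|(m:ℝ) - (j:ℝ)| * δ + -(-|(m:ℝ) - (j:ℝ)| * a) := by ring
        rw [h3, ENNReal.rpow_add _ _ (by norm_num) (by norm_num)]
        ring
    _ = c⁻¹ ^ q * ∑' j : ℤ, (∑' m : ℤ, (2:ℝ≥0∞) ^ (-|((m - j : ℤ) : ℝ)| * (δ - a)) *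
          (g m x * (ω x ((2:ℝ) ^ (-m)))⁻¹)) ^ q := by
        simp only [ENNReal.mul_rpow_of_nonneg c⁻¹ _ hq0, ENNReal.tsum_mul_left]
    _ ≤ _ := by
        rw [ENNReal.mul_rpow_of_nonneg _ _ hq0, mul_assoc]
        gcongr
        exact tsum_conv_rpow_le hq (fun k : ℤ => (2:ℝ≥0∞) ^ (-|(k:ℝ)| * (δ - a))) _

theorem stmt3 (n : ℕ) (hn : 0 < n) (p q τ δ : ℝ)
    (hp : 1 < p) (hq : 1 < q)
    (hτ0 : 0 ≤ τ) (hτ : τ ≤ 1 / conjExp (max p q)) (hδ : (n : ℝ) * τ < δ) :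
    ∃ C : ℝ≥0∞, 0 < C ∧ C < ∞ ∧ ∀ g : ℤ → En n → ℝ≥0∞,
      (∀ m, Measurable (g m)) →
      tildeLpLqNorm n p q τ
          (fun j x => ∑' m : ℤ, (2:ℝ≥0∞) ^ (-(|(m:ℝ) - (j:ℝ)|) * δ) * g m x)
        ≤ C * tildeLpLqNorm n p q τ g := by
  rcases hτ0.eq_or_lt with rfl | hτpos
  -- For `τ = 0` no weight is admissible and both quasi-norms are infinite.
  · refine ⟨1, one_pos, ENNReal.one_lt_top, fun g _ => ?_⟩
    have : tildeLpLqNorm n p q 0 g = ∞ := by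
      simp [tildeLpLqNorm, not_isAdmissibleWeight_zero]
    rw [this, one_mul]
    exact le_top
  set e := conjExp (max p q) with he_def
  have hM : 1 < max p q := lt_max_of_lt_left hp
  have he : 0 < e := div_pos (by linarith) (by linarith)
  have hn' : (0 : ℝ) < n := by exact_mod_cast hn
  -- An exponent strictly between `nτ` and `δ`.
  obtain ⟨a, hna, haδ⟩ := exists_between hδ
  have ha : 0 < a := lt_of_le_of_lt (by positivity) hna
  have hd : 0 < n * τ * e := by positivity
  have hdn : n * τ * e ≤ n := by
    rw [mul_assoc]
    exact mul_le_of_le_one_right hn'.le ((le_div_iff₀ he).1 hτ)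
  have hda : n * τ * e < a * e := mul_lt_mul_of_pos_right hna he
  set K := weightConst a (n * τ * e) e with hK
  have hKt : K ≠ ∞ := (weightConst_lt_top hd hda).ne
  have hK0 : K ≠ 0 := (weightConst_pos _ _ _).ne'
  set c : ℝ≥0∞ := K ^ (-e⁻¹) with hc
  have hc0 : c ≠ 0 := (ENNReal.rpow_pos (pos_iff_ne_zero.2 hK0) hKt).ne'
  have hct : c ≠ ∞ := ENNReal.rpow_ne_top_of_ne_zero hK0 hKt
  set B : ℝ≥0∞ := ∑' k : ℤ, (2:ℝ≥0∞) ^ (-|(k:ℝ)| * (δ - a)) with hB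
  have hBt : B ≠ ∞ := (tsum_two_rpow_neg_abs_lt_top (sub_pos.2 haδ)).ne
  have hB0 : B ≠ 0 := by
    refine (lt_of_lt_of_le ?_ (ENNReal.le_tsum 0)).ne'
    simp
  have hC0 : c⁻¹ * B ≠ 0 := mul_ne_zero (ENNReal.inv_ne_zero.2 hct) hB0
  have hCt : c⁻¹ * B ≠ ∞ := ENNReal.mul_ne_top (ENNReal.inv_ne_top.2 hc0) hBt
  refine ⟨c⁻¹ * B, pos_iff_ne_zero.2 hC0, hCt.lt_top, fun g _ => ?_⟩
  rw [mul_comm, ← ENNReal.div_le_iff hC0 hCt]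
  refine le_iInf₂ fun ω hω => le_iInf₂ fun hadm hvan => ?_
  rw [ENNReal.div_le_iff hC0 hCt, mul_comm]
  have hzero : ∀ (j : ℤ) (x : En n), smoothedWeight n a c ω x ((2:ℝ) ^ (-j)) = 0 →
      ∑' m : ℤ, (2:ℝ≥0∞) ^ (-(|(m:ℝ) - (j:ℝ)|) * δ) * g m x = 0 := by
    intro j x h0
    rw [ENNReal.tsum_eq_zero]
    intro m
    have h1 := le_smoothedWeight n a c ω x j m
    rw [h0, nonpos_iff_eq_zero, mul_eq_zero, mul_eq_zero] at h1
    have h2 : (2:ℝ≥0∞) ^ (-|(m:ℝ) - (j:ℝ)| * a) ≠ 0 :=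
      (ENNReal.rpow_pos (by norm_num) (by norm_num)).ne'
    rw [hvan m x ((h1.resolve_left hc0).resolve_left h2), mul_zero]
  have hp0 : 0 < p := by linarith
  have hq0 : 0 < q := by linarith
  refine (iInf₂_le_of_le (smoothedWeight n a c ω) (measurable_smoothedWeight n a c hω)
    (iInf₂_le_of_le (isAdmissibleWeight_smoothedWeight n hn ha.le he hd hdn hda hadm) hzero
      le_rfl)).trans ?_
  calc _ ≤ (∫⁻ x, ((c⁻¹ * B) ^ q *
          ∑' j : ℤ, g j x ^ q * (ω x ((2:ℝ) ^ (-j))) ^ (-q)) ^ (p / q)) ^ (1 / p) := by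
        gcongr with x
        exact tsum_smoothed_le n hq hc0 hct ω g x
    _ = _ := by
        simp only [ENNReal.mul_rpow_of_nonneg _ _ (div_nonneg hp0.le hq0.le), ← ENNReal.rpow_mul]
        rw [mul_div_cancel₀ _ hq0.ne', lintegral_const_mul' _ _
          (ENNReal.rpow_ne_top_of_nonneg hp0.le hCt),
          ENNReal.mul_rpow_of_nonneg _ _ (by positivity), ← ENNReal.rpow_mul,
          mul_one_div_cancel hp0.ne', ENNReal.rpow_one]
end
end

section
/- Let n ∈ ℕ and b ∈ (0,∞). There exist constants C₁, C₂ > 0, depending only on n and b, such that for all ℓ ∈ ℤ, k ∈ ℤⁿ and x ∈ ℝⁿ: sup_{w∈ℝⁿ} χ_{ℓ,k}(x+w) (1 + 2^ℓ|w|)^{-b} ≤ C₁ (1 + 2^ℓ|x - 2^{-ℓ}k|)^{-b}, and (1 + 2^ℓ|x - 2^{-ℓ}k|)^{-b} ≤ C₂ ∫_{ℝⁿ} χ_{ℓ,k}(x - y) 2^{ℓn} (1 + 2^ℓ|y|)^{-b} dy. -/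
/-!
Both inequalities rest on the fact that every point `z` of the cube `U_{ℓk}` satisfies
`2^ℓ ‖z - 2^{-ℓ}k‖ ≤ n`. By the triangle inequality, if `2^ℓ ‖u - v‖ ≤ n` then
`1 + 2^ℓ‖u‖ ≤ (1 + n) (1 + 2^ℓ‖v‖)`, so the weights `(1 + 2^ℓ‖·‖)^{-b}` at `u` and `v` are
comparable with constant `(1 + n)^b` (`weight_le`). The first inequality is this comparison
for `u = x - 2^{-ℓ}k` and `v = -w`. For the second, the comparison bounds the weight at `y` from
below by a constant on the set `{y | x - y ∈ U_{ℓk}}`, which is a cube of volume `2^{-ℓn}`; this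
volume cancels the factor `2^{ℓn}`. Both constants can be taken to be `(1 + n)^b`.
-/


open MeasureTheory Set

noncomputable section

/-- The cube `U_{ℓk} = ∏_i [(k_i - 1/2) 2^{-ℓ}, (k_i + 1/2) 2^{-ℓ}]`. -/
def Ucube (n : ℕ) (l : ℤ) (k : Fin n → ℤ) : Set (En n) :=
  {x | ∀ i, ((k i : ℝ) - 1/2) * 2 ^ (-l) ≤ x i ∧ x i ≤ ((k i : ℝ) + 1/2) * 2 ^ (-l)}

/-- The point `2^{-ℓ} k ∈ ℝⁿ`. -/
def dyadicPoint (n : ℕ) (l : ℤ) (k : Fin n → ℤ) : En n :=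
  (WithLp.equiv 2 (Fin n → ℝ)).symm (fun i => (2:ℝ) ^ (-l) * (k i : ℝ))

lemma two_zpow_mul_norm_sub_dyadicPoint_le {n : ℕ} {l : ℤ} {k : Fin n → ℤ} {z : En n}
    (hz : z ∈ Ucube n l k) : (2:ℝ) ^ l * ‖z - dyadicPoint n l k‖ ≤ n := by
  have h2 : (0:ℝ) < 2 ^ l := by positivity
  have hinv : (2:ℝ) ^ (-l) * 2 ^ l = 1 := by
    rw [← zpow_add₀ (by norm_num)]; simp
  have hp : (0:ℝ) < 2 ^ (-l) := by positivity
  have hnorm : ‖z - dyadicPoint n l k‖ ≤ n * 2 ^ (-l) := by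
    rw [EuclideanSpace.norm_eq]
    apply Real.sqrt_le_iff.mpr
    refine ⟨by positivity, ?_⟩
    have hc : ∀ i ∈ Finset.univ, ‖(z - dyadicPoint n l k) i‖ ^ 2 ≤ ((2:ℝ) ^ (-l)) ^ 2 := by
      intro i _
      have hi := hz i
      have hd : (z - dyadicPoint n l k) i = z i - 2 ^ (-l) * (k i : ℝ) := rfl
      rw [hd, Real.norm_eq_abs]
      refine pow_le_pow_left₀ (abs_nonneg _) ?_ 2
      rw [abs_le]
      constructor <;> linarith [hi.1, hi.2]
    have hs := Finset.sum_le_sum hc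
    rw [Finset.sum_const, Finset.card_univ, Fintype.card_fin, nsmul_eq_mul] at hs
    refine hs.trans ?_
    rw [mul_pow]
    have hn : (n:ℝ) ≤ (n:ℝ) ^ 2 := by
      exact_mod_cast Nat.le_self_pow (by norm_num) n
    gcongr
  calc (2:ℝ) ^ l * ‖z - dyadicPoint n l k‖ ≤ 2 ^ l * (n * 2 ^ (-l)) := by gcongr
    _ = n * (2 ^ (-l) * 2 ^ l) := by ring
    _ = n := by rw [hinv, mul_one]

/-- The weights `(1 + t‖·‖)^{-b}` at two points at distance at most `n / t` are comparable. -/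
lemma weight_le {E : Type*} [NormedAddCommGroup E] {n : ℕ} {b t : ℝ} (hb : 0 < b) (ht : 0 < t)
    {u v : E} (h : t * ‖u - v‖ ≤ n) :
    (1 + t * ‖v‖) ^ (-b) ≤ (1 + (n:ℝ)) ^ b * (1 + t * ‖u‖) ^ (-b) := by
  have hu : 0 < 1 + t * ‖u‖ := by positivity
  have hv : 0 < 1 + t * ‖v‖ := by positivity
  have hA : 0 < 1 + (n:ℝ) := by positivity
  have hle : 1 + t * ‖u‖ ≤ (1 + n) * (1 + t * ‖v‖) := by
    have h1 : ‖u‖ ≤ ‖u - v‖ + ‖v‖ := by simpa using norm_add_le (u - v) v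
    have h2 : t * ‖u‖ ≤ t * ‖u - v‖ + t * ‖v‖ := by
      rw [← mul_add]; gcongr
    have h3 : 0 ≤ (n:ℝ) * (t * ‖v‖) := by positivity
    linarith
  have hpow := Real.rpow_le_rpow_of_nonpos hu hle (neg_nonpos.mpr hb.le)
  rw [Real.mul_rpow hA.le hv.le] at hpow
  calc (1 + t * ‖v‖) ^ (-b)
      = (1 + (n:ℝ)) ^ b * ((1 + (n:ℝ)) ^ (-b) * (1 + t * ‖v‖) ^ (-b)) := by
        rw [← mul_assoc, ← Real.rpow_add hA]; simp
    _ ≤ _ := by gcongr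

/-- The reflected cube `{y | x - y ∈ U_{ℓk}}` as a coordinate box. -/
lemma reflected_Ucube_eq (n : ℕ) (l : ℤ) (k : Fin n → ℤ) (x : En n) :
    {y : En n | x - y ∈ Ucube n l k} = (WithLp.ofLp : En n → Fin n → ℝ) ⁻¹'
      Icc (fun i => x i - ((k i : ℝ) + 1/2) * 2 ^ (-l))
        (fun i => x i - ((k i : ℝ) - 1/2) * 2 ^ (-l)) := by
  ext y
  simp only [Ucube, mem_ofPred_eq, mem_preimage, mem_Icc, Pi.le_def, PiLp.sub_apply,
    ← forall_and]
  refine forall_congr' fun i => ?_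
  constructor <;> rintro ⟨h1, h2⟩ <;> constructor <;> linarith

lemma volume_reflected_Ucube (n : ℕ) (l : ℤ) (k : Fin n → ℤ) (x : En n) :
    volume {y : En n | x - y ∈ Ucube n l k} = ENNReal.ofReal (2 ^ (-l)) ^ n := by
  rw [reflected_Ucube_eq, (PiLp.volume_preserving_ofLp (Fin n)).measure_preimage
    measurableSet_Icc.nullMeasurableSet, Real.volume_Icc_pi]
  have : ∀ i, x i - ((k i : ℝ) - 1/2) * 2 ^ (-l) - (x i - ((k i : ℝ) + 1/2) * 2 ^ (-l))
      = (2:ℝ) ^ (-l) := fun i => by ring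
  simp only [this, Finset.prod_const, Finset.card_univ, Fintype.card_fin]

lemma isCompact_reflected_Ucube (n : ℕ) (l : ℤ) (k : Fin n → ℤ) (x : En n) :
    IsCompact {y : En n | x - y ∈ Ucube n l k} := by
  rw [reflected_Ucube_eq]
  exact (EuclideanSpace.equiv (Fin n) ℝ).toHomeomorph.isCompact_preimage.mpr isCompact_Icc

theorem stmt16 (n : ℕ) (hn : 0 < n) (b : ℝ) (hb : 0 < b) :
    ∃ C₁ C₂ : ℝ, 0 < C₁ ∧ 0 < C₂ ∧
      ∀ (l : ℤ) (k : Fin n → ℤ) (x : En n),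
        (⨆ w : En n,
            (Ucube n l k).indicator (fun _ => (1:ℝ)) (x + w) * (1 + (2:ℝ)^l * ‖w‖) ^ (-b))
          ≤ C₁ * (1 + (2:ℝ)^l * ‖x - dyadicPoint n l k‖) ^ (-b) ∧
        (1 + (2:ℝ)^l * ‖x - dyadicPoint n l k‖) ^ (-b)
          ≤ C₂ * ∫ y : En n,
              (Ucube n l k).indicator (fun _ => (1:ℝ)) (x - y) *
                ((2:ℝ) ^ (l * (n:ℤ)) * (1 + (2:ℝ)^l * ‖y‖) ^ (-b)) := by
  have hA : (0:ℝ) < (1 + (n:ℝ)) ^ b := by positivity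
  refine ⟨(1 + (n:ℝ)) ^ b, (1 + (n:ℝ)) ^ b, hA, hA, fun l k x => ⟨?_, ?_⟩⟩
  · refine ciSup_le fun w => ?_
    by_cases hw : x + w ∈ Ucube n l k
    · rw [indicator_of_mem hw, one_mul, ← norm_neg w]
      refine weight_le hb (by positivity) ?_
      have := two_zpow_mul_norm_sub_dyadicPoint_le hw
      rwa [show x - dyadicPoint n l k - -w = x + w - dyadicPoint n l k by abel]
    · rw [indicator_of_notMem hw, zero_mul]
      positivity
  · set V : Set (En n) := {y | x - y ∈ Ucube n l k} with hV
    set X : ℝ := (1 + (2:ℝ)^l * ‖x - dyadicPoint n l k‖) ^ (-b) with hX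
    have hVc : IsCompact V := isCompact_reflected_Ucube n l k x
    have hvol : volume V = ENNReal.ofReal (2 ^ (-l)) ^ n := volume_reflected_Ucube n l k x
    have hreal : volume.real V = ((2:ℝ) ^ (-l)) ^ n := by
      rw [measureReal_def, hvol, ENNReal.toReal_pow, ENNReal.toReal_ofReal (by positivity)]
    set g : En n → ℝ := fun y => (2:ℝ) ^ (l * (n:ℤ)) * (1 + (2:ℝ)^l * ‖y‖) ^ (-b) with hg
    have hgc : Continuous g := by
      refine continuous_const.mul (Continuous.rpow_const (by fun_prop) fun y => Or.inl ?_)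
      positivity
    have hint : (∫ y : En n, (Ucube n l k).indicator (fun _ => (1:ℝ)) (x - y) * g y)
        = ∫ y in V, g y := by
      rw [← integral_indicator hVc.measurableSet]
      congr 1
      ext y
      by_cases hy : x - y ∈ Ucube n l k
      · rw [indicator_of_mem hy, indicator_of_mem (show y ∈ V from hy), one_mul]
      · rw [indicator_of_notMem hy, indicator_of_notMem (show y ∉ V from hy), zero_mul]
    change X ≤ (1 + (n:ℝ)) ^ b *
      ∫ y : En n, (Ucube n l k).indicator (fun _ => (1:ℝ)) (x - y) * g y
    rw [hint, ← integral_const_mul]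
    have hlow : ∀ y ∈ V, (2:ℝ) ^ (l * (n:ℤ)) * X ≤ (1 + (n:ℝ)) ^ b * g y := by
      intro y hy
      have h1 := two_zpow_mul_norm_sub_dyadicPoint_le (show x - y ∈ Ucube n l k from hy)
      have h2 : (2:ℝ) ^ l * ‖y - (x - dyadicPoint n l k)‖ ≤ n := by
        rwa [norm_sub_rev, show x - dyadicPoint n l k - y = x - y - dyadicPoint n l k by abel]
      have h3 := weight_le hb (by positivity) h2
      calc (2:ℝ) ^ (l * (n:ℤ)) * X
          ≤ 2 ^ (l * (n:ℤ)) * ((1 + (n:ℝ)) ^ b * (1 + (2:ℝ)^l * ‖y‖) ^ (-b)) := by gcongr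
        _ = (1 + (n:ℝ)) ^ b * g y := by simp only [hg]; ring
    have hmono : ∫ _ in V, (2:ℝ) ^ (l * (n:ℤ)) * X ≤ ∫ y in V, (1 + (n:ℝ)) ^ b * g y :=
      setIntegral_mono_on (continuous_const.continuousOn.integrableOn_compact hVc)
        ((continuous_const.mul hgc).continuousOn.integrableOn_compact hVc)
        hVc.measurableSet hlow
    refine le_of_eq_of_le ?_ hmono
    rw [setIntegral_const, hreal, smul_eq_mul, ← mul_assoc, ← zpow_natCast, ← zpow_mul,
      ← zpow_add₀ (by norm_num)]
    simp
end
end
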